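/- Let V ⊆ ℂⁿ be a connected open set, r ≥ 1, and let b^{jγ}_{kδ} be analytic functions on V, indexed by j, k = 1,…,m, multi-indices γ with |γ| = r and multi-indices δ with |δ| ≤ r − 1. Then the ℂ-vector space of analytic maps τ : V → ℂ^m satisfying ∂^γ τ^j = ∑_{k=1}^m ∑_{|δ| ≤ r−1} b^{jγ}_{kδ}(y) ∂^δ τ^k on V, for all j = 1,…,m and all multi-indices γ with |γ| = r, has dimension at most m times the number of multi-indices δ in n variables with |δ| ≤ r − 1. -/

import Mathlib

/-!
The solution `τ` is determined by its `(r-1)`-jet at a single point `y₀ ∈ V`. Indeed the jet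
`u = (∂^δ τ^k)_{k, |δ| < r}` satisfies a closed linear first order system: a first partial
derivative of an entry of `u` is either another entry of `u` or, when its order is `r`, a linear
combination of the entries by the equation. Hence `‖∂ᵢ u‖ ≤ K ‖u‖` near `y₀`
(`norm_pdi_mpd_le`), and if `u(y₀) = 0`, Grönwall's inequality along the segments issuing from
`y₀` gives `u = 0` near `y₀` (`eventually_zero_of_jet_zero`). The identity theorem on the connected
set `V` then gives `τ = 0` on `V` (`eqOn_zero_of_jet_zero`).

So the kernel of the linear map "jet at `y₀`" on the solution space is contained in the kernel of
the restriction to `V`, and the dimension of the space of restrictions is at most the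
dimension `m · #{δ : |δ| < r}` of the jet space.
-/

/-- The partial derivative of `f : ℂⁿ → ℂ` in the `i`-th coordinate direction. -/
noncomputable def pdi {n : ℕ} (i : Fin n) (f : (Fin n → ℂ) → ℂ) : (Fin n → ℂ) → ℂ :=
  fun y => fderiv ℂ f y (Pi.single i 1)

/-- The iterated partial derivative `∂^α f` of `f : ℂⁿ → ℂ` associated with the
multi-index `α : Fin n → ℕ` (the `i`-th coordinate derivative taken `α i` times). -/
noncomputable def mpd {n : ℕ} (α : Fin n → ℕ) (f : (Fin n → ℂ) → ℂ) : (Fin n → ℂ) → ℂ :=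
  (List.finRange n).foldr (fun i g => (pdi i)^[α i] g) f

/-- The finite set of multi-indices in `n` variables of total degree `< d`. -/
def degLt (n d : ℕ) : Finset (Fin n → ℕ) :=
  (Finset.Iic (fun _ => d)).filter (fun δ => ∑ i, δ i < d)

open Set Filter Topology

/-! ### Partial derivatives of analytic functions -/

lemma mem_degLt {n d : ℕ} {δ : Fin n → ℕ} : δ ∈ degLt n d ↔ ∑ i, δ i < d := by
  simp only [degLt, Finset.mem_filter, Finset.mem_Iic, and_iff_right_iff_imp]
  intro h i
  exact (Finset.single_le_sum (f := δ) (fun _ _ => Nat.zero_le _) (Finset.mem_univ i)).trans h.le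

lemma pdi_analytic {n : ℕ} {V : Set (Fin n → ℂ)} (i : Fin n) {f : (Fin n → ℂ) → ℂ}
    (hf : AnalyticOnNhd ℂ f V) : AnalyticOnNhd ℂ (pdi i f) V := by
  intro y hy
  exact (ContinuousLinearMap.analyticAt (ContinuousLinearMap.apply ℂ ℂ (Pi.single i (1 : ℂ))) _).comp
    (hf y hy).fderiv

lemma pdi_iter_analytic {n : ℕ} {V : Set (Fin n → ℂ)} (i : Fin n) (k : ℕ)
    {f : (Fin n → ℂ) → ℂ} (hf : AnalyticOnNhd ℂ f V) : AnalyticOnNhd ℂ ((pdi i)^[k] f) V := by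
  induction k with
  | zero => exact hf
  | succ k ih =>
    rw [Function.iterate_succ_apply']
    exact pdi_analytic i ih

lemma pdi_congr {n : ℕ} {V : Set (Fin n → ℂ)} (hV : IsOpen V) (i : Fin n)
    {f g : (Fin n → ℂ) → ℂ} (h : EqOn f g V) : EqOn (pdi i f) (pdi i g) V := by
  intro y hy
  have : f =ᶠ[𝓝 y] g := h.eventuallyEq_of_mem (hV.mem_nhds hy)
  simp only [pdi, this.fderiv_eq]

lemma pdi_iter_congr {n : ℕ} {V : Set (Fin n → ℂ)} (hV : IsOpen V) (i : Fin n) (k : ℕ)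
    {f g : (Fin n → ℂ) → ℂ} (h : EqOn f g V) : EqOn ((pdi i)^[k] f) ((pdi i)^[k] g) V := by
  induction k with
  | zero => exact h
  | succ k ih =>
    rw [Function.iterate_succ_apply', Function.iterate_succ_apply']
    exact pdi_congr hV i ih

lemma pdi_comm {n : ℕ} {V : Set (Fin n → ℂ)} (i j : Fin n)
    {f : (Fin n → ℂ) → ℂ} (hf : AnalyticOnNhd ℂ f V) :
    EqOn (pdi i (pdi j f)) (pdi j (pdi i f)) V := by
  intro y hy
  have hd : DifferentiableAt ℂ (fderiv ℂ f) y := (hf y hy).fderiv.differentiableAt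
  have key : ∀ a b : Fin n,
      pdi a (pdi b f) y = fderiv ℂ (fderiv ℂ f) y (Pi.single a 1) (Pi.single b 1) := by
    intro a b
    have := (hd.hasFDerivAt.clm_apply (hasFDerivAt_const (Pi.single b (1 : ℂ)) y)).fderiv
    change fderiv ℂ (fun y => fderiv ℂ f y (Pi.single b 1)) y (Pi.single a 1) = _
    rw [this]
    simp
  rw [key, key]
  have hs : IsSymmSndFDerivAt ℂ f y :=
    ((hf y hy).contDiffAt (n := 2)).isSymmSndFDerivAt (by simp)
  exact hs _ _

lemma pdi_iter_comm {n : ℕ} {V : Set (Fin n → ℂ)} (hV : IsOpen V) (i j : Fin n) (k : ℕ)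
    {f : (Fin n → ℂ) → ℂ} (hf : AnalyticOnNhd ℂ f V) :
    EqOn (pdi i ((pdi j)^[k] f)) ((pdi j)^[k] (pdi i f)) V := by
  induction k with
  | zero => exact fun _ _ => rfl
  | succ k ih =>
    rw [Function.iterate_succ_apply', Function.iterate_succ_apply']
    exact (pdi_comm i j (pdi_iter_analytic j k hf)).trans (pdi_congr hV j ih)

lemma foldr_pdi_analytic {n : ℕ} {V : Set (Fin n → ℂ)} (l : List (Fin n)) (α : Fin n → ℕ)
    {f : (Fin n → ℂ) → ℂ} (hf : AnalyticOnNhd ℂ f V) :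
    AnalyticOnNhd ℂ (l.foldr (fun i g => (pdi i)^[α i] g) f) V := by
  induction l with
  | nil => exact hf
  | cons j l ih => exact pdi_iter_analytic j _ ih

lemma mpd_analytic {n : ℕ} {V : Set (Fin n → ℂ)} (α : Fin n → ℕ)
    {f : (Fin n → ℂ) → ℂ} (hf : AnalyticOnNhd ℂ f V) : AnalyticOnNhd ℂ (mpd α f) V :=
  foldr_pdi_analytic _ α hf

lemma foldr_pdi_congr_index {n : ℕ} (l : List (Fin n)) (α β : Fin n → ℕ)
    (h : ∀ i ∈ l, α i = β i) (f : (Fin n → ℂ) → ℂ) :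
    l.foldr (fun i g => (pdi i)^[α i] g) f = l.foldr (fun i g => (pdi i)^[β i] g) f := by
  induction l with
  | nil => rfl
  | cons j l ih =>
    simp only [List.foldr_cons]
    rw [ih (fun i hi => h i (List.mem_cons_of_mem _ hi)), h j List.mem_cons_self]

/-- Differentiating an iterated partial derivative raises the exponent of the variable: the new
derivative is moved inwards past the others until it meets its own variable. -/
lemma pdi_foldr {n : ℕ} {V : Set (Fin n → ℂ)} (hV : IsOpen V) (i : Fin n)
    (l : List (Fin n)) (hl : l.Nodup) (hi : i ∈ l) (α : Fin n → ℕ)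
    {f : (Fin n → ℂ) → ℂ} (hf : AnalyticOnNhd ℂ f V) :
    EqOn (pdi i (l.foldr (fun i g => (pdi i)^[α i] g) f))
      (l.foldr (fun j g => (pdi j)^[(α + Pi.single i 1 : Fin n → ℕ) j] g) f) V := by
  induction l with
  | nil => simp at hi
  | cons j l ih =>
    rw [List.nodup_cons] at hl
    simp only [List.foldr_cons]
    by_cases hij : i = j
    · subst hij
      rw [← foldr_pdi_congr_index l α (α + Pi.single i 1)]
      · have : (α + Pi.single i 1 : Fin n → ℕ) i = α i + 1 := by simp
        rw [this, Function.iterate_succ_apply']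
        exact fun _ _ => rfl
      · intro k hk
        have : k ≠ i := fun h => hl.1 (h ▸ hk)
        simp [this]
    · have hi' : i ∈ l := by simpa [hij] using hi
      have : (α + Pi.single i 1 : Fin n → ℕ) j = α j := by simp [Ne.symm hij]
      rw [this]
      exact (pdi_iter_comm hV i j _ (foldr_pdi_analytic l α hf)).trans
        (pdi_iter_congr hV j _ (ih hl.2 hi'))

lemma pdi_mpd {n : ℕ} {V : Set (Fin n → ℂ)} (hV : IsOpen V) (i : Fin n) (α : Fin n → ℕ)
    {f : (Fin n → ℂ) → ℂ} (hf : AnalyticOnNhd ℂ f V) :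
    EqOn (pdi i (mpd α f)) (mpd (α + Pi.single i 1) f) V :=
  pdi_foldr hV i _ (List.nodup_finRange n) (List.mem_finRange i) α hf

lemma mpd_zero {n : ℕ} (f : (Fin n → ℂ) → ℂ) : mpd 0 f = f := by
  unfold mpd
  induction List.finRange n with
  | nil => rfl
  | cons j l ih => simp

lemma pdi_iter_lin {n : ℕ} {V : Set (Fin n → ℂ)} (hV : IsOpen V) (i : Fin n) (k : ℕ) (a : ℂ)
    {f g : (Fin n → ℂ) → ℂ} (hf : AnalyticOnNhd ℂ f V) (hg : AnalyticOnNhd ℂ g V) :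
    EqOn ((pdi i)^[k] (fun z => a * f z + g z))
      (fun z => a * (pdi i)^[k] f z + (pdi i)^[k] g z) V := by
  induction k with
  | zero => exact fun _ _ => rfl
  | succ k ih =>
    simp only [Function.iterate_succ_apply']
    refine (pdi_congr hV i ih).trans ?_
    intro y hy
    have h1 := (pdi_iter_analytic i k hf y hy).differentiableAt.hasFDerivAt
    have h2 := (pdi_iter_analytic i k hg y hy).differentiableAt.hasFDerivAt
    have := ((h1.const_mul a).add h2).fderiv
    simp only [pdi] at this ⊢
    erw [this]
    simp

lemma mpd_lin {n : ℕ} {V : Set (Fin n → ℂ)} (hV : IsOpen V) (α : Fin n → ℕ) (a : ℂ)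
    {f g : (Fin n → ℂ) → ℂ} (hf : AnalyticOnNhd ℂ f V) (hg : AnalyticOnNhd ℂ g V) :
    EqOn (mpd α (fun z => a * f z + g z)) (fun z => a * mpd α f z + mpd α g z) V := by
  unfold mpd
  induction List.finRange n with
  | nil => exact fun _ _ => rfl
  | cons j l ih =>
    simp only [List.foldr_cons]
    exact (pdi_iter_congr hV j _ ih).trans
      (pdi_iter_lin hV j _ a (foldr_pdi_analytic l α hf) (foldr_pdi_analytic l α hg))

/-! ### Solutions are determined by their jet at a point -/

/-- `τ` is analytic on `V` and solves there the system with coefficients `b`. -/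
def IsSol {n m : ℕ} (r : ℕ) (V : Set (Fin n → ℂ))
    (b : Fin m → (Fin n → ℕ) → Fin m → (Fin n → ℕ) → (Fin n → ℂ) → ℂ)
    (τ : (Fin n → ℂ) → Fin m → ℂ) : Prop :=
  (∀ j, AnalyticOnNhd ℂ (fun y => τ y j) V) ∧
    ∀ (j : Fin m) (γ : Fin n → ℕ), (∑ i, γ i) = r → ∀ y ∈ V,
      mpd γ (fun z => τ z j) y
        = ∑ k, ∑ δ ∈ degLt n r, b j γ k δ y * mpd δ (fun z => τ z k) y

/-- The `(r-1)`-jet of `τ` at `y`: all partial derivatives of order `< r` of all components. -/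
noncomputable def jet {n m : ℕ} (r : ℕ) (τ : (Fin n → ℂ) → Fin m → ℂ) (y : Fin n → ℂ) :
    Fin m × degLt n r → ℂ :=
  fun p => mpd p.2 (fun z => τ z p.1) y

/-- The sum of all `|b^{jγ}_{kδ}|` occurring in the equation with index `(j, γ)`. -/
noncomputable def rowBound {n m : ℕ} (r : ℕ)
    (b : Fin m → (Fin n → ℕ) → Fin m → (Fin n → ℕ) → (Fin n → ℂ) → ℂ)
    (j : Fin m) (γ : Fin n → ℕ) (y : Fin n → ℂ) : ℝ :=
  ∑ k, ∑ δ ∈ degLt n r, ‖b j γ k δ y‖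

lemma rowBound_nonneg {n m r : ℕ}
    (b : Fin m → (Fin n → ℕ) → Fin m → (Fin n → ℕ) → (Fin n → ℂ) → ℂ)
    (j : Fin m) (γ : Fin n → ℕ) (y : Fin n → ℂ) : 0 ≤ rowBound r b j γ y :=
  Finset.sum_nonneg fun _ _ => Finset.sum_nonneg fun _ _ => norm_nonneg _

/-- A continuous function bounding the coefficients of the first order system satisfied by the
jet: one plus the sum of the `rowBound`s over all `j` and all `γ = δ₀ + eᵢ` with `|δ₀| < r`. -/
noncomputable def coefBound {n m : ℕ} (r : ℕ)
    (b : Fin m → (Fin n → ℕ) → Fin m → (Fin n → ℕ) → (Fin n → ℂ) → ℂ) (y : Fin n → ℂ) : ℝ :=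
  1 + ∑ q : Fin n × degLt n r × Fin m, rowBound r b q.2.2 (q.2.1.1 + Pi.single q.1 1) y

lemma one_le_coefBound {n m r : ℕ}
    (b : Fin m → (Fin n → ℕ) → Fin m → (Fin n → ℕ) → (Fin n → ℂ) → ℂ) (y : Fin n → ℂ) :
    1 ≤ coefBound r b y :=
  le_add_of_nonneg_right (Finset.sum_nonneg fun _ _ => rowBound_nonneg _ _ _ _)

lemma rowBound_le_coefBound {n m r : ℕ}
    (b : Fin m → (Fin n → ℕ) → Fin m → (Fin n → ℕ) → (Fin n → ℂ) → ℂ) (y : Fin n → ℂ)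
    (i : Fin n) (j : Fin m) {δ₀ : Fin n → ℕ} (hδ₀ : δ₀ ∈ degLt n r) :
    rowBound r b j (δ₀ + Pi.single i 1) y ≤ coefBound r b y := by
  have := Finset.single_le_sum
    (f := fun q : Fin n × degLt n r × Fin m =>
      rowBound r b q.2.2 (q.2.1.1 + Pi.single q.1 1) y)
    (fun _ _ => rowBound_nonneg _ _ _ _) (Finset.mem_univ (i, ⟨δ₀, hδ₀⟩, j))
  exact this.trans (le_add_of_nonneg_left zero_le_one)

lemma norm_mpd_le_jet {n m r : ℕ} (τ : (Fin n → ℂ) → Fin m → ℂ) (y : Fin n → ℂ) (k : Fin m)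
    {δ : Fin n → ℕ} (hδ : δ ∈ degLt n r) :
    ‖mpd δ (fun z => τ z k) y‖ ≤ ‖jet r τ y‖ :=
  norm_le_pi_norm (jet r τ y) (k, ⟨δ, hδ⟩)

/-- The first order system satisfied by the jet, as an estimate: `∂ᵢ ∂^δ₀ τ^j` is again an entry
of the jet if `|δ₀| + 1 < r`, and otherwise is given by the equation of index `(j, δ₀ + eᵢ)`. -/
lemma norm_pdi_mpd_le {n m r : ℕ} {V : Set (Fin n → ℂ)} (hV : IsOpen V)
    {b : Fin m → (Fin n → ℕ) → Fin m → (Fin n → ℕ) → (Fin n → ℂ) → ℂ}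
    {τ : (Fin n → ℂ) → Fin m → ℂ} (hτ : IsSol r V b τ) {y : Fin n → ℂ} (hy : y ∈ V)
    (i : Fin n) (j : Fin m) {δ₀ : Fin n → ℕ} (hδ₀ : δ₀ ∈ degLt n r) :
    ‖pdi i (mpd δ₀ (fun z => τ z j)) y‖ ≤ coefBound r b y * ‖jet r τ y‖ := by
  rw [pdi_mpd hV i δ₀ (hτ.1 j) hy]
  have hsum : ∑ l, (δ₀ + Pi.single i 1 : Fin n → ℕ) l = (∑ l, δ₀ l) + 1 := by
    simp [Finset.sum_add_distrib]
  have h0 := mem_degLt.1 hδ₀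
  by_cases hlt : (∑ l, δ₀ l) + 1 < r
  · exact (norm_mpd_le_jet τ y j (mem_degLt.2 (hsum ▸ hlt))).trans
      (le_mul_of_one_le_left (norm_nonneg _) (one_le_coefBound b y))
  · rw [hτ.2 j _ (by omega) y hy]
    refine le_trans ?_ (mul_le_mul_of_nonneg_right
      (rowBound_le_coefBound b y i j hδ₀) (norm_nonneg _))
    rw [rowBound, Finset.sum_mul]
    refine (norm_sum_le _ _).trans (Finset.sum_le_sum fun k _ => ?_)
    rw [Finset.sum_mul]
    refine (norm_sum_le _ _).trans (Finset.sum_le_sum fun δ hδ => ?_)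
    rw [norm_mul]
    exact mul_le_mul_of_nonneg_left (norm_mpd_le_jet τ y k hδ) (norm_nonneg _)

lemma coefBound_continuousAt {n m r : ℕ} {V : Set (Fin n → ℂ)}
    {b : Fin m → (Fin n → ℕ) → Fin m → (Fin n → ℕ) → (Fin n → ℂ) → ℂ}
    (hb : ∀ j γ k δ, AnalyticOnNhd ℂ (b j γ k δ) V) {y : Fin n → ℂ} (hy : y ∈ V) :
    ContinuousAt (coefBound r b) y := by
  unfold coefBound rowBound
  refine continuousAt_const.add ?_
  refine tendsto_finsetSum _ fun q _ => tendsto_finsetSum _ fun k _ =>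
    tendsto_finsetSum _ fun δ _ => ?_
  exact (hb _ _ _ _ y hy).continuousAt.norm

lemma fderiv_apply_eq_sum_pdi {n : ℕ} (f : (Fin n → ℂ) → ℂ) (y v : Fin n → ℂ) :
    fderiv ℂ f y v = ∑ i, v i * pdi i f y := by
  conv_lhs => rw [pi_eq_sum_univ' v]
  simp [pdi, map_sum]

/-- Grönwall's inequality along the segments from `y₀`: a jet that vanishes at `y₀` vanishes
nearby, and so does the solution, its `0`-th order part. -/
lemma eventually_zero_of_jet_zero {n m r : ℕ} (hr : 1 ≤ r) {V : Set (Fin n → ℂ)} (hV : IsOpen V)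
    {b : Fin m → (Fin n → ℕ) → Fin m → (Fin n → ℕ) → (Fin n → ℂ) → ℂ}
    (hb : ∀ j γ k δ, AnalyticOnNhd ℂ (b j γ k δ) V)
    {τ : (Fin n → ℂ) → Fin m → ℂ} (hτ : IsSol r V b τ) {y₀ : Fin n → ℂ} (hy₀ : y₀ ∈ V)
    (h0 : jet r τ y₀ = 0) : ∀ᶠ y in 𝓝 y₀, τ y = 0 := by
  set K := coefBound r b y₀ + 1 with hK
  have hev : ∀ᶠ y in 𝓝 y₀, y ∈ V ∧ coefBound r b y < K :=
    (hV.eventually_mem hy₀).and ((coefBound_continuousAt hb hy₀).eventually_lt_const (by linarith))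
  obtain ⟨ε, hε, hball⟩ := Metric.eventually_nhds_iff_ball.1 hev
  filter_upwards [Metric.ball_mem_nhds y₀ hε] with y hy
  set v := y - y₀ with hv
  let c : ℝ → (Fin n → ℂ) := fun t => y₀ + (t : ℂ) • v
  have hc : ∀ t ∈ Icc (0 : ℝ) 1, c t ∈ Metric.ball y₀ ε := by
    intro t ht
    have hyn : ‖v‖ < ε := by simpa [hv, dist_eq_norm] using hy
    have : ‖(t : ℂ) • v‖ ≤ ‖v‖ := by
      rw [norm_smul, Complex.norm_real, Real.norm_of_nonneg ht.1]
      exact mul_le_of_le_one_left (norm_nonneg _) ht.2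
    simpa [c, dist_eq_norm] using this.trans_lt hyn
  have hcd : ∀ t, HasDerivAt c v t := by
    intro t
    have := ((Complex.ofRealCLM.hasDerivAt (x := t)).smul_const v).const_add y₀
    simpa [c] using this
  let u' : ℝ → (Fin m × degLt n r → ℂ) := fun t p =>
    ∑ i, v i * pdi i (mpd p.2 (fun z => τ z p.1)) (c t)
  have hd : ∀ t ∈ Icc (0 : ℝ) 1, HasDerivAt (fun t => jet r τ (c t)) (u' t) t := by
    intro t ht
    rw [hasDerivAt_pi]
    intro p
    have hf := (mpd_analytic p.2 (hτ.1 p.1) _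
      (hball _ (hc t ht)).1).differentiableAt.hasFDerivAt.restrictScalars ℝ
    have := hf.comp_hasDerivAt t (hcd t)
    simp only [u']
    rw [← fderiv_apply_eq_sum_pdi]
    exact this
  have hbound : ∀ t ∈ Ico (0 : ℝ) 1,
      ‖u' t‖ ≤ ((∑ i, ‖v i‖) * K) * ‖jet r τ (c t)‖ := by
    intro t ht
    have ht' := Ico_subset_Icc_self ht
    obtain ⟨hcV, hcK⟩ := hball _ (hc t ht')
    have hK0 : 0 ≤ K := by linarith [one_le_coefBound (r := r) b y₀]
    rw [pi_norm_le_iff_of_nonneg (by positivity)]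
    intro p
    rw [mul_assoc, Finset.sum_mul]
    refine (norm_sum_le _ _).trans (Finset.sum_le_sum fun i _ => ?_)
    rw [norm_mul]
    refine mul_le_mul_of_nonneg_left ?_ (norm_nonneg _)
    exact (norm_pdi_mpd_le hV hτ hcV i p.1 p.2.2).trans
      (mul_le_mul_of_nonneg_right hcK.le (norm_nonneg _))
  have hzero : jet r τ (c 1) = 0 := by
    refine eq_zero_of_abs_deriv_le_mul_abs_self_of_eq_zero_right
      (f := fun t => jet r τ (c t)) (f' := u') (a := 0) (b := 1) ?_ ?_ ?_ hbound 1 (by simp)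
    · exact fun t ht => (hd t ht).continuousAt.continuousWithinAt
    · exact fun t ht => (hd t (Ico_subset_Icc_self ht)).hasDerivWithinAt
    · simpa [c] using h0
  have hc1 : c 1 = y := by simp [c, hv]
  rw [hc1] at hzero
  ext k
  have := congrFun hzero (k, ⟨0, mem_degLt.2 (by simpa using Nat.lt_of_lt_of_le Nat.zero_lt_one hr)⟩)
  simpa [jet, mpd_zero] using this

lemma eqOn_zero_of_jet_zero {n m r : ℕ} (hr : 1 ≤ r) {V : Set (Fin n → ℂ)} (hV : IsOpen V)
    (hVc : IsPreconnected V)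
    {b : Fin m → (Fin n → ℕ) → Fin m → (Fin n → ℕ) → (Fin n → ℂ) → ℂ}
    (hb : ∀ j γ k δ, AnalyticOnNhd ℂ (b j γ k δ) V)
    {τ : (Fin n → ℂ) → Fin m → ℂ} (hτ : IsSol r V b τ) {y₀ : Fin n → ℂ} (hy₀ : y₀ ∈ V)
    (h0 : jet r τ y₀ = 0) : EqOn τ 0 V := by
  intro y hy
  ext k
  refine (hτ.1 k).eqOn_zero_of_preconnected_of_eventuallyEq_zero hVc hy₀ ?_ hy
  filter_upwards [eventually_zero_of_jet_zero hr hV hb hτ hy₀ h0] with z hz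
  simp [hz]

/-! ### The solution space and the dimension count -/

lemma jet_lin {n m r : ℕ} {V : Set (Fin n → ℂ)} (hV : IsOpen V) (a : ℂ)
    {σ τ : (Fin n → ℂ) → Fin m → ℂ} (hσ : ∀ j, AnalyticOnNhd ℂ (fun y => σ y j) V)
    (hτ : ∀ j, AnalyticOnNhd ℂ (fun y => τ y j) V) {y : Fin n → ℂ} (hy : y ∈ V) :
    jet r (a • σ + τ) y = a • jet r σ y + jet r τ y := by
  ext p
  exact mpd_lin hV p.2 a (hσ p.1) (hτ p.1) hy

lemma isSol_lin {n m r : ℕ} {V : Set (Fin n → ℂ)} (hV : IsOpen V)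
    {b : Fin m → (Fin n → ℕ) → Fin m → (Fin n → ℕ) → (Fin n → ℂ) → ℂ} (a : ℂ)
    {σ τ : (Fin n → ℂ) → Fin m → ℂ} (hσ : IsSol r V b σ) (hτ : IsSol r V b τ) :
    IsSol r V b (a • σ + τ) := by
  refine ⟨fun j => (analyticOnNhd_const.mul (hσ.1 j)).add (hτ.1 j), fun j γ hγ y hy => ?_⟩
  have key : ∀ (k : Fin m) (δ : Fin n → ℕ), mpd δ (fun z => (a • σ + τ) z k) y
      = a * mpd δ (fun z => σ z k) y + mpd δ (fun z => τ z k) y :=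
    fun k δ => mpd_lin hV δ a (hσ.1 k) (hτ.1 k) hy
  simp only [key]
  rw [hσ.2 j γ hγ y hy, hτ.2 j γ hγ y hy]
  simp only [Finset.mul_sum, ← Finset.sum_add_distrib]
  refine Finset.sum_congr rfl fun k _ => Finset.sum_congr rfl fun δ _ => by ring

lemma mpd_zero_fun {n : ℕ} (α : Fin n → ℕ) (y : Fin n → ℂ) :
    mpd α (fun _ => (0 : ℂ)) y = 0 := by
  have h := mpd_lin (V := univ) isOpen_univ α (-1) (f := fun _ => 0) (g := fun _ => 0)
    analyticOnNhd_const analyticOnNhd_const (mem_univ y)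
  simpa using h

/-- The vector space of solutions, as functions on all of `ℂⁿ` with arbitrary values off `V`. -/
def solSpace {n m : ℕ} (r : ℕ) {V : Set (Fin n → ℂ)} (hV : IsOpen V)
    (b : Fin m → (Fin n → ℕ) → Fin m → (Fin n → ℕ) → (Fin n → ℂ) → ℂ) :
    Submodule ℂ ((Fin n → ℂ) → Fin m → ℂ) where
  carrier := {τ | IsSol r V b τ}
  zero_mem' := by
    refine ⟨fun j => analyticOnNhd_const, fun j γ _ y _ => ?_⟩
    simp [mpd_zero_fun]
  add_mem' := by
    intro σ τ hσ hτ
    simpa using isSol_lin hV 1 hσ hτ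
  smul_mem' := by
    intro a τ hτ
    -- `a • τ = (a - 1) • τ + τ` reduces this to closure under `a • σ + τ`.
    have := isSol_lin hV (a - 1) hτ hτ
    simpa [sub_smul] using this

/-- The jet at `y₀ ∈ V` as a linear map on the solution space. -/
noncomputable def jetMap {n m : ℕ} (r : ℕ) {V : Set (Fin n → ℂ)} (hV : IsOpen V)
    (b : Fin m → (Fin n → ℕ) → Fin m → (Fin n → ℕ) → (Fin n → ℂ) → ℂ)
    {y₀ : Fin n → ℂ} (hy₀ : y₀ ∈ V) :
    solSpace r hV b →ₗ[ℂ] (Fin m × degLt n r → ℂ) where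
  toFun τ := jet r τ.1 y₀
  map_add' σ τ := by
    have := jet_lin (r := r) hV 1 σ.2.1 τ.2.1 hy₀
    simpa using this
  map_smul' a τ := by
    have := jet_lin (r := r) hV (a - 1) τ.2.1 τ.2.1 hy₀
    simpa [sub_smul] using this

lemma rank_range_le_of_ker_le {M N P : Type} [AddCommGroup M] [Module ℂ M]
    [AddCommGroup N] [Module ℂ N] [AddCommGroup P] [Module ℂ P]
    (R : M →ₗ[ℂ] N) (J : M →ₗ[ℂ] P) (h : LinearMap.ker J ≤ LinearMap.ker R) :
    Module.rank ℂ (LinearMap.range R) ≤ Module.rank ℂ P := by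
  rw [← Submodule.range_liftQ (LinearMap.ker J) R h]
  calc _ ≤ Module.rank ℂ (M ⧸ LinearMap.ker J) := rank_range_le _
    _ = Module.rank ℂ (LinearMap.range J) := J.quotKerEquivRange.rank_eq
    _ ≤ _ := Submodule.rank_le _

/-- Let `V ⊆ ℂⁿ` be a connected open set, `r ≥ 1`, and let `b^{jγ}_{kδ}` be
analytic functions on `V` (`j, k = 1,…,m`, `|γ| = r`, `|δ| ≤ r−1`).  Then the `ℂ`-vector
space of analytic maps `τ : V → ℂ^m` satisfying
`∂^γ τ^j = ∑_{k=1}^m ∑_{|δ| ≤ r−1} b^{jγ}_{kδ}(y) ∂^δ τ^k` on `V` for all `j` and all `γ`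
with `|γ| = r` has dimension at most `m` times the number of multi-indices `δ` in `n`
variables with `|δ| ≤ r − 1`. -/
theorem solved_system_dimension_bound
    (n m r : ℕ) (hr : 1 ≤ r)
    (V : Set (Fin n → ℂ)) (hVopen : IsOpen V) (hVconn : IsConnected V)
    (b : Fin m → (Fin n → ℕ) → Fin m → (Fin n → ℕ) → (Fin n → ℂ) → ℂ)
    (hb : ∀ j γ k δ, AnalyticOnNhd ℂ (b j γ k δ) V) :
    Module.rank ℂ
      ↥(Submodule.span ℂ
        (V.restrict ''
          {τ : (Fin n → ℂ) → Fin m → ℂ |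
            (∀ j, AnalyticOnNhd ℂ (fun y => τ y j) V) ∧
            ∀ (j : Fin m) (γ : Fin n → ℕ), (∑ i, γ i) = r → ∀ y ∈ V,
              mpd γ (fun z => τ z j) y
                = ∑ k, ∑ δ ∈ degLt n r, b j γ k δ y * mpd δ (fun z => τ z k) y}))
      ≤ ((m * (degLt n r).card : ℕ) : Cardinal) := by
  obtain ⟨y₀, hy₀⟩ := hVconn.nonempty
  let R : solSpace r hVopen b →ₗ[ℂ] (V → Fin m → ℂ) :=
    (LinearMap.funLeft ℂ (Fin m → ℂ) ((↑) : V → (Fin n → ℂ))).comp (solSpace r hVopen b).subtype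
  have hker : LinearMap.ker (jetMap r hVopen b hy₀) ≤ LinearMap.ker R := by
    intro τ hτ
    have h := eqOn_zero_of_jet_zero hr hVopen hVconn.isPreconnected hb τ.2 hy₀ hτ
    ext y : 1
    exact h y.2
  have hspan : Submodule.span ℂ (V.restrict '' {τ | IsSol r V b τ}) ≤ LinearMap.range R := by
    rw [Submodule.span_le]
    rintro _ ⟨τ, hτ, rfl⟩
    exact ⟨⟨τ, hτ⟩, rfl⟩
  refine (Submodule.rank_mono hspan).trans ((rank_range_le_of_ker_le R _ hker).trans ?_)
  simp
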